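/- Let A ↪ B be an integral ring extension. An element b ∈ B lies in the weak subintegral closure of A in B (i.e., A[b] is a subring with Spec(A[b]) → Spec(A) a universal homeomorphism) if and only if b ⊗ 1 = 1 ⊗ b in the reduction (B ⊗_A B)_red. -/

import Mathlib

open AlgebraicGeometry CategoryTheory TensorProduct

universe u

/-- A morphism of schemes is a universal homeomorphism if every base change is a
homeomorphism on underlying spaces. -/
def UniversalHomeomorphism : MorphismProperty Scheme.{u} :=
  MorphismProperty.universally
    (AlgebraicGeometry.topologically fun {α β} _ _ f => IsHomeomorph f)

/-!
For an integral surjective morphism, universal homeomorphism amounts to universal injectivity,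
that is, to surjectivity of the diagonal. The diagonal of `Spec S ⟶ Spec R` is the closed immersion
given by multiplication `S ⊗[R] S → S`, whose kernel is generated by the elements
`1 ⊗ s - s ⊗ 1`; hence it is surjective iff these are all nilpotent. When `R ⊆ S ⊆ B` with `B`
integral over `R`, `Spec (B ⊗[R] B) → Spec (S ⊗[R] S)` is surjective, so nilpotency may be tested
in `B ⊗[R] B`. There the condition on `s` is that it equalizes two algebra homomorphisms, so it
holds on `R[b]` as soon as it holds at `b`.
-/

theorem universalHomeomorphism_iff_universallyInjective {X Y : Scheme.{u}} (f : X ⟶ Y)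
    [IsIntegralHom f] [Surjective f] : UniversalHomeomorphism f ↔ UniversallyInjective f := by
  rw [universallyInjective_iff]
  refine ⟨fun h _ _ _ _ f' hf' ↦ (h _ _ f' hf').injective, fun h _ _ _ _ f' hf' ↦ ?_⟩
  have : Surjective f' := MorphismProperty.of_isPullback hf'.flip ‹Surjective f›
  have : IsIntegralHom f' := MorphismProperty.of_isPullback hf'.flip ‹IsIntegralHom f›
  exact isHomeomorph_iff_continuous_isClosedMap_bijective.mpr
    ⟨f'.continuous, f'.isClosedMap, h _ _ f' hf', f'.surjective⟩

theorem isNilpotent_map_iff_of_denseRange_comap {R S : Type*} [CommSemiring R] [CommSemiring S]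
    {f : R →+* S} (hf : DenseRange (PrimeSpectrum.comap f)) {x : R} :
    IsNilpotent (f x) ↔ IsNilpotent x := by
  refine ⟨fun ⟨n, hn⟩ ↦ ?_, fun h ↦ h.map f⟩
  have hker : RingHom.ker f ≤ nilradical R :=
    (PrimeSpectrum.denseRange_comap_iff_ker_le_nilRadical f).mp hf
  have hxn : IsNilpotent (x ^ n) := hker (by rw [RingHom.mem_ker, map_pow, hn])
  exact hxn.of_pow

theorem comap_surjective_iff_ker_le_nilradical {R S : Type*} [CommRing R] [CommRing S]
    {f : R →+* S} (hf : Function.Surjective f) :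
    Function.Surjective (PrimeSpectrum.comap f) ↔ RingHom.ker f ≤ nilradical R := by
  rw [← Set.range_eq_univ, range_comap_of_surjective S f hf, PrimeSpectrum.zeroLocus_eq_univ_iff]
  rfl

section

variable {R S S' T T' : Type u} [CommRing R] [CommRing S] [CommRing S'] [CommRing T] [CommRing T']
  [Algebra R S] [Algebra R S'] [Algebra R T] [Algebra R T']

theorem SpecMap_algHom_comp_SpecMap_algebraMap (f : S →ₐ[R] S') :
    Spec.map (CommRingCat.ofHom (f : S →+* S')) ≫
        Spec.map (CommRingCat.ofHom (algebraMap R S)) =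
      Spec.map (CommRingCat.ofHom (algebraMap R S')) := by
  rw [← Spec.map_comp, ← CommRingCat.ofHom_comp, f.comp_algebraMap]

theorem SpecMap_tensorProductMap (f : S →ₐ[R] S') (g : T →ₐ[R] T') :
    Spec.map (CommRingCat.ofHom (Algebra.TensorProduct.map f g : S ⊗[R] T →+* S' ⊗[R] T')) =
      (pullbackSpecIso R S' T').inv ≫
        Limits.pullback.map _ _ _ _ (Spec.map (CommRingCat.ofHom (f : S →+* S')))
          (Spec.map (CommRingCat.ofHom (g : T →+* T'))) (𝟙 _)
          ((Category.comp_id _).trans (SpecMap_algHom_comp_SpecMap_algebraMap f).symm)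
          ((Category.comp_id _).trans (SpecMap_algHom_comp_SpecMap_algebraMap g).symm) ≫
        (pullbackSpecIso R S T).hom := by
  rw [← Category.assoc, ← Iso.comp_inv_eq]
  ext1
  · simp only [Category.assoc, pullbackSpecIso_inv_fst, Limits.pullback.map,
      Limits.pullback.lift_fst, pullbackSpecIso_inv_fst_assoc, ← Spec.map_comp,
      ← CommRingCat.ofHom_comp]
    congr 2
    ext s
    simp
  · simp only [Category.assoc, pullbackSpecIso_inv_snd, Limits.pullback.map,
      Limits.pullback.lift_snd, pullbackSpecIso_inv_snd_assoc, ← Spec.map_comp,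
      ← CommRingCat.ofHom_comp]
    congr 2
    ext t
    simp

theorem comap_tensorProductMap_surjective {f : S →ₐ[R] S'} {g : T →ₐ[R] T'}
    (hf : Function.Surjective (PrimeSpectrum.comap (f : S →+* S')))
    (hg : Function.Surjective (PrimeSpectrum.comap (g : T →+* T'))) :
    Function.Surjective (PrimeSpectrum.comap
      (Algebra.TensorProduct.map f g : S ⊗[R] T →+* S' ⊗[R] T')) := by
  suffices Surjective (Spec.map (CommRingCat.ofHom
      (Algebra.TensorProduct.map f g : S ⊗[R] T →+* S' ⊗[R] T'))) from this.surj
  rw [SpecMap_tensorProductMap, MorphismProperty.cancel_left_of_respectsIso @Surjective,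
    MorphismProperty.cancel_right_of_respectsIso @Surjective, surjective_iff, ← Set.range_eq_univ,
    Scheme.Pullback.range_map]
  have hf_range : Set.range (Spec.map (CommRingCat.ofHom (f : S →+* S'))) = Set.univ := hf.range_eq
  have hg_range : Set.range (Spec.map (CommRingCat.ofHom (g : T →+* T'))) = Set.univ := hg.range_eq
  rw [hf_range, hg_range, Set.preimage_univ, Set.preimage_univ, Set.univ_inter]

end

section

variable (A B : Type*) [CommRing A] [CommRing B] [Algebra A B]

/-- The equalizer of the two coprojections `B ⇉ (B ⊗[A] B)_red`, as a subalgebra of `B`. For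
`A ⊆ B` integral it is the weak subintegral closure of `A` in `B`. -/
def tensorRedEqualizer : Subalgebra A B :=
  AlgHom.equalizer
    ((Ideal.Quotient.mkₐ A (nilradical (B ⊗[A] B))).comp Algebra.TensorProduct.includeLeft)
    ((Ideal.Quotient.mkₐ A (nilradical (B ⊗[A] B))).comp Algebra.TensorProduct.includeRight)

variable {A B}

theorem mem_tensorRedEqualizer {b : B} :
    b ∈ tensorRedEqualizer A B ↔
      Ideal.Quotient.mk (nilradical (B ⊗[A] B)) (b ⊗ₜ[A] 1) =
        Ideal.Quotient.mk (nilradical (B ⊗[A] B)) (1 ⊗ₜ[A] b) :=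
  Iff.rfl

theorem mem_tensorRedEqualizer_iff_isNilpotent {b : B} :
    b ∈ tensorRedEqualizer A B ↔ IsNilpotent (1 ⊗ₜ b - b ⊗ₜ 1 : B ⊗[A] B) := by
  rw [mem_tensorRedEqualizer, eq_comm, Ideal.Quotient.eq, mem_nilradical]

theorem kaehlerDifferentialIdeal_le_nilradical_iff :
    KaehlerDifferential.ideal A B ≤ nilradical (B ⊗[A] B) ↔ tensorRedEqualizer A B = ⊤ := by
  rw [← KaehlerDifferential.span_range_eq_ideal, Ideal.span_le, Set.range_subset_iff,
    Algebra.eq_top_iff]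
  exact forall_congr' fun b ↦ mem_tensorRedEqualizer_iff_isNilpotent.symm

end

theorem universallyInjective_SpecMap_iff_tensorRedEqualizer_eq_top {R S : Type u} [CommRing R]
    [CommRing S] [Algebra R S] :
    UniversallyInjective (Spec.map (CommRingCat.ofHom (algebraMap R S))) ↔
      tensorRedEqualizer R S = ⊤ := by
  have hmul : Function.Surjective (Algebra.TensorProduct.lmul' R : S ⊗[R] S →ₐ[R] S).toRingHom :=
    fun s ↦ ⟨s ⊗ₜ 1, by simp⟩
  rw [UniversallyInjective.iff_diagonal, diagonal_SpecMap,
    MorphismProperty.cancel_right_of_respectsIso @Surjective, surjective_iff,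
    ← kaehlerDifferentialIdeal_le_nilradical_iff]
  exact comap_surjective_iff_ker_le_nilradical hmul

theorem comap_tensorRedEqualizer {R S T : Type u} [CommRing R] [CommRing S] [CommRing T]
    [Algebra R S] [Algebra R T] {f : S →ₐ[R] T}
    (hf : Function.Surjective (PrimeSpectrum.comap (f : S →+* T))) :
    (tensorRedEqualizer R T).comap f = tensorRedEqualizer R S := by
  ext s
  have hmap : Algebra.TensorProduct.map f f (1 ⊗ₜ s - s ⊗ₜ 1) = 1 ⊗ₜ f s - f s ⊗ₜ 1 := by simp
  rw [Subalgebra.mem_comap, mem_tensorRedEqualizer_iff_isNilpotent,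
    mem_tensorRedEqualizer_iff_isNilpotent, ← hmap]
  exact isNilpotent_map_iff_of_denseRange_comap (comap_tensorProductMap_surjective hf hf).denseRange

theorem universalHomeomorphism_SpecMap_iff_le_tensorRedEqualizer {A B : Type u} [CommRing A]
    [CommRing B] [Algebra A B]
    (hsurj : Function.Surjective (PrimeSpectrum.comap (algebraMap A B)))
    [Algebra.IsIntegral A B] (S : Subalgebra A B) :
    UniversalHomeomorphism (Spec.map (CommRingCat.ofHom (algebraMap A S))) ↔
      S ≤ tensorRedEqualizer A B := by
  have : Algebra.IsIntegral A S := .of_injective S.val Subtype.val_injective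
  have : Algebra.IsIntegral S B := .tower_top A
  have : IsIntegralHom (Spec.map (CommRingCat.ofHom (algebraMap A S))) :=
    IsIntegralHom.SpecMap_iff.mpr (algebraMap_isIntegral_iff.mpr ‹_›)
  have : Surjective (Spec.map (CommRingCat.ofHom (algebraMap A S))) :=
    ⟨Function.Surjective.of_comp (g := PrimeSpectrum.comap (algebraMap S B)) hsurj⟩
  have hval : Function.Surjective (PrimeSpectrum.comap (S.val : S →+* B)) :=
    Algebra.IsIntegral.comap_surjective S B
  rw [universalHomeomorphism_iff_universallyInjective,
    universallyInjective_SpecMap_iff_tensorRedEqualizer_eq_top, ← comap_tensorRedEqualizer hval,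
    Algebra.eq_top_iff]
  exact Subtype.forall

theorem stmt18_general {A B : Type u} [CommRing A] [CommRing B] [Algebra A B]
    (hsurj : Function.Surjective (PrimeSpectrum.comap (algebraMap A B)))
    [Algebra.IsIntegral A B] (s : Set B) :
    UniversalHomeomorphism
        (Spec.map (CommRingCat.ofHom (algebraMap A (Algebra.adjoin A s)))) ↔
      ∀ b ∈ s, Ideal.Quotient.mk (nilradical (B ⊗[A] B)) (b ⊗ₜ[A] 1) =
        Ideal.Quotient.mk (nilradical (B ⊗[A] B)) (1 ⊗ₜ[A] b) := by
  rw [universalHomeomorphism_SpecMap_iff_le_tensorRedEqualizer hsurj, Algebra.adjoin_le_iff]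
  rfl

/-- Let `A ↪ B` be an integral ring extension.  An element `b : B` lies in the weak
subintegral closure of `A` in `B` (i.e. `Spec (A[b]) → Spec A` is a universal
homeomorphism) iff `b ⊗ 1 = 1 ⊗ b` in `(B ⊗_A B)_red`. -/
theorem stmt18 {A B : Type u} [CommRing A] [CommRing B] [Algebra A B]
    (hinj : Function.Injective (algebraMap A B)) [Algebra.IsIntegral A B] (b : B) :
    UniversalHomeomorphism
        (Spec.map (CommRingCat.ofHom (algebraMap A (Algebra.adjoin A {b})))) ↔
      Ideal.Quotient.mk (nilradical (B ⊗[A] B)) (b ⊗ₜ[A] 1) =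
        Ideal.Quotient.mk (nilradical (B ⊗[A] B)) (1 ⊗ₜ[A] b) := by
  simpa using stmt18_general ((algebraMap_isIntegral_iff.mpr ‹_›).comap_surjective hinj) {b}
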